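/- arXiv:2005.12123 — 4 statements merged into one kernel-verified Lean document; each statement's English description precedes it below -/
import Mathlib

section
/- Triangle inequality for the p-feature robust Wasserstein distance: let L ≥ 1 and let (E_ℓ, d_ℓ), ℓ = 1,…,L, be metric spaces. Let p ≥ 1 be real. Let x_1,…,x_n, y_1,…,y_m, z_1,…,z_u be points of ∏_ℓ E_ℓ and let a ∈ Σ^n, b ∈ Σ^m, c ∈ Σ^u be probability weight vectors. Then FRWD_p((a,x),(c,z)) ≤ FRWD_p((a,x),(b,y)) + FRWD_p((b,y),(c,z)). -/
open scoped BigOperators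

noncomputable section

/-- The probability simplex `Σ^n ⊆ ℝ^n`. -/
def probSimplex (n : ℕ) : Set (Fin n → ℝ) :=
  {a | (∀ i, 0 ≤ a i) ∧ ∑ i, a i = 1}

/-- The transport polytope `U(a,b)` of couplings between weight vectors `a` and `b`. -/
def transportPolytope {n m : ℕ} (a : Fin n → ℝ) (b : Fin m → ℝ) :
    Set (Fin n → Fin m → ℝ) :=
  {P | (∀ i j, 0 ≤ P i j) ∧ (∀ i, ∑ j, P i j = a i) ∧ (∀ j, ∑ i, P i j = b j)}

/-- The `p`-feature robust Wasserstein distance between the weighted point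
configurations `(a, x)` and `(b, y)` in `∏ ℓ, E ℓ`:
`FRWD_p = (inf_{Π ∈ U(a,b)} sup_{α ∈ Σ^L} ∑_{i,j} Π_{ij} ∑_ℓ α_ℓ d_ℓ(x_i(ℓ), y_j(ℓ))^p)^(1/p)`. -/
def FRWD {L n m : ℕ} {E : Fin L → Type*} [∀ ℓ, MetricSpace (E ℓ)] (p : ℝ)
    (a : Fin n → ℝ) (x : Fin n → ∀ ℓ, E ℓ)
    (b : Fin m → ℝ) (y : Fin m → ∀ ℓ, E ℓ) : ℝ :=
  (sInf {v : ℝ | ∃ P ∈ transportPolytope a b,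
      v = sSup {w : ℝ | ∃ α ∈ probSimplex L,
        w = ∑ i, ∑ j, P i j * ∑ ℓ, α ℓ * dist (x i ℓ) (y j ℓ) ^ p}}) ^ (1 / p)

/-!
A linear functional on the simplex has its supremum at a vertex, so `FRWD_p` is the infimum over
couplings of the largest of the `L` one-feature costs `(∑ Π_{ij} d_ℓ(x_i(ℓ), y_j(ℓ))^p)^(1/p)`.
Two couplings sharing the marginal `b` are glued along it, and Minkowski's inequality for the glued
plan gives the triangle inequality for all features simultaneously, since the gluing does not
depend on the feature.
-/

lemma rpow_ciSup_of_nonneg {ι : Sort*} [Nonempty ι] {f : ι → ℝ} {r : ℝ} (hr : 0 ≤ r)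
    (hf : ∀ i, 0 ≤ f i) (hbdd : BddAbove (Set.range f)) :
    (⨆ i, f i) ^ r = ⨆ i, f i ^ r := by
  have hmono : MonotoneOn (fun t : ℝ => t ^ r) (Set.range f) :=
    (Real.monotoneOn_rpow_Ici_of_exponent_nonneg hr).mono (Set.range_subset_iff.2 hf)
  have hcont := Real.continuousAt_rpow_const (⨆ i, f i) r (Or.inr hr)
  exact (hmono.map_csSup_of_continuousWithinAt hcont.continuousWithinAt
    (Set.range_nonempty f) hbdd).trans (congrArg sSup (Set.range_comp (· ^ r) f).symm)

lemma rpow_ciInf_of_nonneg {ι : Sort*} [Nonempty ι] {f : ι → ℝ} {r : ℝ} (hr : 0 ≤ r)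
    (hf : ∀ i, 0 ≤ f i) : (⨅ i, f i) ^ r = ⨅ i, f i ^ r := by
  have hmono : MonotoneOn (fun t : ℝ => t ^ r) (Set.range f) :=
    (Real.monotoneOn_rpow_Ici_of_exponent_nonneg hr).mono (Set.range_subset_iff.2 hf)
  have hcont := Real.continuousAt_rpow_const (⨅ i, f i) r (Or.inr hr)
  exact (hmono.map_csInf_of_continuousWithinAt hcont.continuousWithinAt
    (Set.range_nonempty f) ⟨0, Set.forall_mem_range.2 hf⟩).trans
    (congrArg sInf (Set.range_comp (· ^ r) f).symm)

lemma weighted_Lp_add_le_of_nonneg {ι : Type*} (s : Finset ι) {p : ℝ} (hp : 1 ≤ p) {w f g : ι → ℝ}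
    (hw : ∀ i ∈ s, 0 ≤ w i) (hf : ∀ i ∈ s, 0 ≤ f i) (hg : ∀ i ∈ s, 0 ≤ g i) :
    (∑ i ∈ s, w i * (f i + g i) ^ p) ^ (1 / p) ≤
      (∑ i ∈ s, w i * f i ^ p) ^ (1 / p) + (∑ i ∈ s, w i * g i ^ p) ^ (1 / p) := by
  have absorb_weight : ∀ h : ι → ℝ, (∀ i ∈ s, 0 ≤ h i) →
      ∑ i ∈ s, (w i ^ (1 / p) * h i) ^ p = ∑ i ∈ s, w i * h i ^ p := by
    refine fun h hh => Finset.sum_congr rfl fun i hi => ?_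
    rw [Real.mul_rpow (Real.rpow_nonneg (hw i hi) _) (hh i hi), ← Real.rpow_mul (hw i hi),
      one_div_mul_cancel (by positivity), Real.rpow_one]
  have minkowski := Real.Lp_add_le_of_nonneg s hp
    (fun i hi => mul_nonneg (Real.rpow_nonneg (hw i hi) (1 / p)) (hf i hi))
    (fun i hi => mul_nonneg (Real.rpow_nonneg (hw i hi) (1 / p)) (hg i hi))
  simp only [← mul_add] at minkowski
  rwa [absorb_weight f hf, absorb_weight g hg,
    absorb_weight (fun i => f i + g i) fun i hi => add_nonneg (hf i hi) (hg i hi)] at minkowski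

lemma sSup_image_stdSimplex_sum_mul {ι : Type*} [Fintype ι] [Nonempty ι] (c : ι → ℝ) :
    sSup ((fun α => ∑ i, α i * c i) '' stdSimplex ℝ ι) = ⨆ i, c i := by
  classical
  have vertex_mem : ∀ i, c i ∈ (fun α => ∑ j, α j * c j) '' stdSimplex ℝ ι := fun i =>
    ⟨Pi.single i 1, single_mem_stdSimplex ℝ i, by simp [Pi.single_apply]⟩
  refine IsLUB.csSup_eq ⟨?_, fun B hB => ciSup_le fun i => hB (vertex_mem i)⟩
    ⟨_, vertex_mem (Classical.arbitrary ι)⟩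
  rintro _ ⟨α, hα, rfl⟩
  calc ∑ i, α i * c i ≤ ∑ i, α i * ⨆ j, c j := Finset.sum_le_sum fun i _ =>
        mul_le_mul_of_nonneg_left (le_ciSup (Set.finite_range c).bddAbove i) (hα.1 i)
    _ = ⨆ j, c j := by rw [← Finset.sum_mul, hα.2, one_mul]

lemma exists_gluing {ι κ μ : Type*} [Fintype ι] [Fintype μ] {P : ι → κ → ℝ} {Q : κ → μ → ℝ}
    (hP : ∀ i j, 0 ≤ P i j) (hQ : ∀ j k, 0 ≤ Q j k) (h : ∀ j, ∑ i, P i j = ∑ k, Q j k) :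
    ∃ T : ι → κ → μ → ℝ, (∀ i j k, 0 ≤ T i j k) ∧
      (∀ i j, ∑ k, T i j k = P i j) ∧ (∀ j k, ∑ i, T i j k = Q j k) := by
  -- Given the middle point `j`, the two endpoints are taken independently; if `j` carries no mass,
  -- then `0 / 0 = 0` is the right value.
  refine ⟨fun i j k => P i j * Q j k / ∑ i', P i' j, fun i j k => ?_, fun i j => ?_, fun j k => ?_⟩
  · exact div_nonneg (mul_nonneg (hP i j) (hQ j k)) (Finset.sum_nonneg fun i' _ => hP i' j)
  · rw [← Finset.sum_div, ← Finset.mul_sum, ← h]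
    exact mul_div_cancel_of_imp fun h0 =>
      (Finset.sum_eq_zero_iff_of_nonneg fun i' _ => hP i' j).1 h0 i (Finset.mem_univ i)
  · rw [← Finset.sum_div, ← Finset.sum_mul, h]
    exact mul_div_cancel_left_of_imp fun h0 =>
      (Finset.sum_eq_zero_iff_of_nonneg fun k' _ => hQ j k').1 h0 k (Finset.mem_univ k)

section TransportCost

variable {ι κ μ X : Type*} [Fintype ι] [Fintype κ] [Fintype μ] [PseudoMetricSpace X]

/-- The cost of the transport plan `P` from the points `x` to the points `y` when moving a unit of
mass over a distance `d` costs `d ^ p`. The `p`-th root is not part of the definition. -/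
def transportCost (p : ℝ) (P : ι → κ → ℝ) (x : ι → X) (y : κ → X) : ℝ :=
  ∑ i, ∑ j, P i j * dist (x i) (y j) ^ p

lemma transportCost_nonneg {P : ι → κ → ℝ} (hP : ∀ i j, 0 ≤ P i j) (p : ℝ) (x : ι → X)
    (y : κ → X) : 0 ≤ transportCost p P x y :=
  Finset.sum_nonneg fun i _ => Finset.sum_nonneg fun j _ =>
    mul_nonneg (hP i j) (Real.rpow_nonneg dist_nonneg p)

lemma transportCost_marginals_rpow_le_add {p : ℝ} (hp : 1 ≤ p) {T : ι → κ → μ → ℝ}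
    (hT : ∀ i j k, 0 ≤ T i j k) (x : ι → X) (y : κ → X) (z : μ → X) :
    transportCost p (fun i k => ∑ j, T i j k) x z ^ (1 / p) ≤
      transportCost p (fun i j => ∑ k, T i j k) x y ^ (1 / p) +
        transportCost p (fun j k => ∑ i, T i j k) y z ^ (1 / p) := by
  have hxy : transportCost p (fun i j => ∑ k, T i j k) x y =
      ∑ t : ι × κ × μ, T t.1 t.2.1 t.2.2 * dist (x t.1) (y t.2.1) ^ p := by
    simp only [transportCost, Finset.sum_mul, Fintype.sum_prod_type]
  have hyz : transportCost p (fun j k => ∑ i, T i j k) y z =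
      ∑ t : ι × κ × μ, T t.1 t.2.1 t.2.2 * dist (y t.2.1) (z t.2.2) ^ p := by
    simp only [transportCost, Finset.sum_mul, Fintype.sum_prod_type]
    rw [Finset.sum_comm (s := (Finset.univ : Finset ι))]
    exact Finset.sum_congr rfl fun j _ => Finset.sum_comm
  have hxz : transportCost p (fun i k => ∑ j, T i j k) x z =
      ∑ t : ι × κ × μ, T t.1 t.2.1 t.2.2 * dist (x t.1) (z t.2.2) ^ p := by
    simp only [transportCost, Finset.sum_mul, Fintype.sum_prod_type]
    exact Finset.sum_congr rfl fun i _ => Finset.sum_comm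
  have hxz_le : transportCost p (fun i k => ∑ j, T i j k) x z ≤ ∑ t : ι × κ × μ,
      T t.1 t.2.1 t.2.2 * (dist (x t.1) (y t.2.1) + dist (y t.2.1) (z t.2.2)) ^ p := by
    rw [hxz]
    gcongr with t
    · exact hT _ _ _
    · exact dist_triangle _ _ _
  calc transportCost p (fun i k => ∑ j, T i j k) x z ^ (1 / p)
      ≤ (∑ t : ι × κ × μ, T t.1 t.2.1 t.2.2 *
          (dist (x t.1) (y t.2.1) + dist (y t.2.1) (z t.2.2)) ^ p) ^ (1 / p) :=
        Real.rpow_le_rpow (transportCost_nonneg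
          (fun i k => Finset.sum_nonneg fun j _ => hT i j k) p x z) hxz_le (by positivity)
    _ ≤ _ := by
        rw [hxy, hyz]
        exact weighted_Lp_add_le_of_nonneg Finset.univ hp (fun t _ => hT _ _ _)
          (fun _ _ => dist_nonneg) (fun _ _ => dist_nonneg)

lemma sSup_stdSimplex_cost_eq_iSup_transportCost {F : Type*} [Fintype F] [Nonempty F]
    {E : F → Type*} [∀ ℓ, PseudoMetricSpace (E ℓ)] (p : ℝ) (P : ι → κ → ℝ)
    (x : ι → ∀ ℓ, E ℓ) (y : κ → ∀ ℓ, E ℓ) :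
    sSup {w : ℝ | ∃ α ∈ stdSimplex ℝ F,
        w = ∑ i, ∑ j, P i j * ∑ ℓ, α ℓ * dist (x i ℓ) (y j ℓ) ^ p} =
      ⨆ ℓ, transportCost p P (x · ℓ) (y · ℓ) := by
  have cost_linear (α : F → ℝ) : ∑ i, ∑ j, P i j * ∑ ℓ, α ℓ * dist (x i ℓ) (y j ℓ) ^ p =
      ∑ ℓ, α ℓ * transportCost p P (x · ℓ) (y · ℓ) := by
    simp only [transportCost, Finset.mul_sum, mul_left_comm (P _ _)]
    exact Finset.sum_comm_cycle
  rw [← sSup_image_stdSimplex_sum_mul]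
  refine congrArg sSup (Set.ext fun w => exists_congr fun α => and_congr_right fun _ => ?_)
  rw [cost_linear, eq_comm]

end TransportCost

section TransportPolytope

variable {n m u : ℕ} {p : ℝ} {a : Fin n → ℝ} {b : Fin m → ℝ} {c : Fin u → ℝ}

lemma transportPolytope_nonempty (ha : ∀ i, 0 ≤ a i) (hb : ∀ j, 0 ≤ b j)
    (hab : ∑ i, a i = ∑ j, b j) : (transportPolytope a b).Nonempty := by
  -- Glue the couplings of `a` and of `b` with a single point of the same mass.
  obtain ⟨T, hT, hTa, hTb⟩ := exists_gluing (P := fun i (_ : Unit) => a i) (Q := fun _ j => b j)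
    (fun i _ => ha i) (fun _ j => hb j) fun _ => hab
  exact ⟨fun i j => T i () j, fun i j => hT i () j, fun i => hTa i (), fun j => hTb () j⟩

lemma exists_mem_transportPolytope_transportCost_rpow_le_add (hp : 1 ≤ p)
    {F : Type*} {E : F → Type*} [∀ ℓ, PseudoMetricSpace (E ℓ)]
    {P : Fin n → Fin m → ℝ} {Q : Fin m → Fin u → ℝ}
    (hP : P ∈ transportPolytope a b) (hQ : Q ∈ transportPolytope b c)
    (x : Fin n → ∀ ℓ, E ℓ) (y : Fin m → ∀ ℓ, E ℓ) (z : Fin u → ∀ ℓ, E ℓ) :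
    ∃ R ∈ transportPolytope a c, ∀ ℓ, transportCost p R (x · ℓ) (z · ℓ) ^ (1 / p) ≤
      transportCost p P (x · ℓ) (y · ℓ) ^ (1 / p) +
        transportCost p Q (y · ℓ) (z · ℓ) ^ (1 / p) := by
  obtain ⟨T, hT, hTP, hTQ⟩ := exists_gluing hP.1 hQ.1 fun j => (hP.2.2 j).trans (hQ.2.1 j).symm
  refine ⟨fun i k => ∑ j, T i j k, ⟨?_, fun i => ?_, fun k => ?_⟩, fun ℓ => ?_⟩
  · exact fun i k => Finset.sum_nonneg fun j _ => hT i j k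
  · rw [Finset.sum_comm]
    simp only [hTP, hP.2.1]
  · rw [Finset.sum_comm]
    simp only [hTQ, hQ.2.2]
  · simpa only [hTP, hTQ] using
      transportCost_marginals_rpow_le_add hp hT (x · ℓ) (y · ℓ) (z · ℓ)

end TransportPolytope

section FRWD

variable {L n m u : ℕ} {E : Fin L → Type*} [∀ ℓ, MetricSpace (E ℓ)] {p : ℝ}
  {a : Fin n → ℝ} {b : Fin m → ℝ} {c : Fin u → ℝ}

lemma probSimplex_eq_stdSimplex (n : ℕ) : probSimplex n = stdSimplex ℝ (Fin n) :=
  rfl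

lemma FRWD_eq_iInf_iSup_transportCost_rpow [NeZero L] (hp : 0 ≤ p)
    (hab : (transportPolytope a b).Nonempty) (x : Fin n → ∀ ℓ, E ℓ) (y : Fin m → ∀ ℓ, E ℓ) :
    FRWD p a x b y = ⨅ P : transportPolytope a b,
      ⨆ ℓ, transportCost p P.1 (x · ℓ) (y · ℓ) ^ (1 / p) := by
  have : Nonempty (transportPolytope a b) := hab.to_subtype
  have cost_nonneg (P : transportPolytope a b) (ℓ : Fin L) :
      0 ≤ transportCost p P.1 (x · ℓ) (y · ℓ) := transportCost_nonneg P.2.1 p _ _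
  have hr : 0 ≤ 1 / p := by positivity
  calc FRWD p a x b y
      = (⨅ P : transportPolytope a b, ⨆ ℓ, transportCost p P.1 (x · ℓ) (y · ℓ)) ^ (1 / p) := by
        simp only [FRWD, probSimplex_eq_stdSimplex, sSup_stdSimplex_cost_eq_iSup_transportCost,
          iInf, Set.range, Subtype.exists, exists_prop, eq_comm]
    _ = ⨅ P : transportPolytope a b, (⨆ ℓ, transportCost p P.1 (x · ℓ) (y · ℓ)) ^ (1 / p) :=
        rpow_ciInf_of_nonneg hr fun P => Real.iSup_nonneg (cost_nonneg P)
    _ = _ := iInf_congr fun P =>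
        rpow_ciSup_of_nonneg hr (cost_nonneg P) (Set.finite_range _).bddAbove

theorem FRWD_triangle_general (hL : 1 ≤ L) (hp : 1 ≤ p)
    (x : Fin n → ∀ ℓ, E ℓ) (y : Fin m → ∀ ℓ, E ℓ) (z : Fin u → ∀ ℓ, E ℓ)
    (ha : ∀ i, 0 ≤ a i) (hb : ∀ j, 0 ≤ b j) (hc : ∀ k, 0 ≤ c k)
    (hab : ∑ i, a i = ∑ j, b j) (hbc : ∑ j, b j = ∑ k, c k) :
    FRWD p a x c z ≤ FRWD p a x b y + FRWD p b y c z := by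
  have : NeZero L := NeZero.of_pos hL
  have hp0 : 0 ≤ p := zero_le_one.trans hp
  have hPab := transportPolytope_nonempty ha hb hab
  have hPbc := transportPolytope_nonempty hb hc hbc
  have hPac := transportPolytope_nonempty ha hc (hab.trans hbc)
  have := hPab.to_subtype
  have := hPbc.to_subtype
  rw [FRWD_eq_iInf_iSup_transportCost_rpow hp0 hPab, FRWD_eq_iInf_iSup_transportCost_rpow hp0 hPbc,
    FRWD_eq_iInf_iSup_transportCost_rpow hp0 hPac]
  refine le_ciInf_add_ciInf fun P Q => ?_
  obtain ⟨R, hR, hle⟩ := exists_mem_transportPolytope_transportCost_rpow_le_add hp P.2 Q.2 x y z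
  have hbdd : BddBelow (Set.range fun R : transportPolytope a c =>
      ⨆ ℓ, transportCost p R.1 (x · ℓ) (z · ℓ) ^ (1 / p)) :=
    ⟨0, Set.forall_mem_range.2 fun R => Real.iSup_nonneg fun ℓ =>
      Real.rpow_nonneg (transportCost_nonneg R.2.1 p _ _) _⟩
  refine ciInf_le_of_le hbdd ⟨R, hR⟩ (ciSup_le fun ℓ => (hle ℓ).trans (add_le_add ?_ ?_))
  · exact le_ciSup (f := fun ℓ => transportCost p P.1 (x · ℓ) (y · ℓ) ^ (1 / p))
      (Set.finite_range _).bddAbove ℓ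
  · exact le_ciSup (f := fun ℓ => transportCost p Q.1 (y · ℓ) (z · ℓ) ^ (1 / p))
      (Set.finite_range _).bddAbove ℓ

end FRWD

/-- triangle inequality for the `p`-feature robust Wasserstein distance. -/
theorem FRWD_triangle (L : ℕ) (hL : 1 ≤ L) (E : Fin L → Type*) [∀ ℓ, MetricSpace (E ℓ)]
    (p : ℝ) (hp : 1 ≤ p) (n m u : ℕ)
    (x : Fin n → ∀ ℓ, E ℓ) (y : Fin m → ∀ ℓ, E ℓ) (z : Fin u → ∀ ℓ, E ℓ)
    (a : Fin n → ℝ) (b : Fin m → ℝ) (c : Fin u → ℝ)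
    (ha : a ∈ probSimplex n) (hb : b ∈ probSimplex m) (hc : c ∈ probSimplex u) :
    FRWD p a x c z ≤ FRWD p a x b y + FRWD p b y c z :=
  FRWD_triangle_general hL hp x y z ha.1 hb.1 hc.1 (ha.2.trans hb.2.symm) (hb.2.trans hc.2.symm)
end
end

section
/- Identity of indiscernibles: let L ≥ 1 and let (E_ℓ, d_ℓ), ℓ = 1,…,L, be metric spaces, and let p ≥ 1 be real. Let x_1,…,x_n and y_1,…,y_m be points of ∏_ℓ E_ℓ, and let a ∈ Σ^n, b ∈ Σ^m be probability weight vectors. If FRWD_p((a,x),(b,y)) = 0, then the two weighted point configurations define the same discrete measure: for every point z ∈ ∏_ℓ E_ℓ, ∑_{i : x_i = z} a_i = ∑_{j : y_j = z} b_j. -/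
open scoped BigOperators

noncomputable section

/-!
The polytope `U(a,b)` is compact and the worst-case cost is continuous in the plan, so the infimum
is attained. If it is zero, testing against the vertices of the simplex shows that the optimal plan
costs nothing in each feature separately, so it only carries mass between equal points; its two
marginals then induce the same measure.
-/

section Couplings

variable {n m : ℕ} {a : Fin n → ℝ} {b : Fin m → ℝ} {P : Fin n → Fin m → ℝ}

lemma mul_mem_transportPolytope (ha : a ∈ probSimplex n) (hb : b ∈ probSimplex m) :
    (fun i j ↦ a i * b j) ∈ transportPolytope a b :=
  ⟨fun i j ↦ mul_nonneg (ha.1 i) (hb.1 j),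
    fun i ↦ by rw [← Finset.mul_sum, hb.2, mul_one],
    fun j ↦ by rw [← Finset.sum_mul, ha.2, one_mul]⟩

lemma le_of_mem_transportPolytope (hP : P ∈ transportPolytope a b) (i : Fin n) (j : Fin m) :
    P i j ≤ a i :=
  hP.2.1 i ▸ Finset.single_le_sum (fun k _ ↦ hP.1 i k) (Finset.mem_univ j)

lemma isClosed_transportPolytope (a : Fin n → ℝ) (b : Fin m → ℝ) :
    IsClosed (transportPolytope a b) := by
  simp only [transportPolytope, Set.ofPred_and, Set.ofPred_forall]
  refine .inter ?nonneg (.inter ?rows ?columns)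
  case nonneg =>
    exact isClosed_iInter fun i ↦ isClosed_iInter fun j ↦ isClosed_le (by fun_prop) (by fun_prop)
  case rows => exact isClosed_iInter fun i ↦ isClosed_eq (by fun_prop) (by fun_prop)
  case columns => exact isClosed_iInter fun j ↦ isClosed_eq (by fun_prop) (by fun_prop)

lemma isCompact_transportPolytope (a : Fin n → ℝ) (b : Fin m → ℝ) :
    IsCompact (transportPolytope a b) :=
  (isCompact_Icc (a := 0) (b := fun i _ ↦ a i)).of_isClosed_subset (isClosed_transportPolytope a b)
    fun _ hP ↦ ⟨hP.1, le_of_mem_transportPolytope hP⟩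

lemma sum_ite_eq_sum_ite_of_mem_transportPolytope {X : Type*} [DecidableEq X]
    {x : Fin n → X} {y : Fin m → X} (hP : P ∈ transportPolytope a b)
    (hxy : ∀ i j, P i j ≠ 0 → x i = y j) (z : X) :
    (∑ i, if x i = z then a i else 0) = ∑ j, if y j = z then b j else 0 := by
  have same_side (i : Fin n) (j : Fin m) :
      (if x i = z then P i j else 0) = if y j = z then P i j else 0 := by
    by_cases hij : P i j = 0
    · simp only [hij, ite_self]
    · rw [hxy i j hij]
  calc (∑ i, if x i = z then a i else 0)
      = ∑ i, ∑ j, if x i = z then P i j else 0 := by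
        simp only [← hP.2.1, Finset.sum_ite_irrel, Finset.sum_const_zero]
    _ = ∑ j, ∑ i, if y j = z then P i j else 0 := by
        simp only [same_side]
        exact Finset.sum_comm
    _ = ∑ j, if y j = z then b j else 0 := by
        simp only [← hP.2.2, Finset.sum_ite_irrel, Finset.sum_const_zero]

end Couplings

section RobustCost

variable {L n m : ℕ} {c : Fin L → Fin n → Fin m → ℝ} {P : Fin n → Fin m → ℝ}

/-- The cost of the plan `P` for the cost matrices `c ℓ` mixed with feature weights `α`. -/
def planCost (c : Fin L → Fin n → Fin m → ℝ) (P : Fin n → Fin m → ℝ) (α : Fin L → ℝ) : ℝ :=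
  ∑ i, ∑ j, P i j * ∑ ℓ, α ℓ * c ℓ i j

/-- The worst-case cost of the plan `P` over all feature weights in the simplex; it takes the junk
value `0` when there are no features. -/
def robustCost (c : Fin L → Fin n → Fin m → ℝ) (P : Fin n → Fin m → ℝ) : ℝ :=
  sSup (planCost c P '' probSimplex L)

lemma isCompact_probSimplex (n : ℕ) : IsCompact (probSimplex n) :=
  isCompact_stdSimplex ℝ (Fin n)

lemma single_mem_probSimplex (i : Fin n) : Pi.single i 1 ∈ probSimplex n :=
  single_mem_stdSimplex ℝ i

lemma continuous_uncurry_planCost (c : Fin L → Fin n → Fin m → ℝ) :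
    Continuous (Function.uncurry (planCost c)) := by
  unfold Function.uncurry planCost
  fun_prop

lemma continuous_robustCost (c : Fin L → Fin n → Fin m → ℝ) : Continuous (robustCost c) :=
  (isCompact_probSimplex L).continuous_sSup (continuous_uncurry_planCost c)

lemma planCost_le_robustCost (c : Fin L → Fin n → Fin m → ℝ) (P : Fin n → Fin m → ℝ)
    {α : Fin L → ℝ} (hα : α ∈ probSimplex L) : planCost c P α ≤ robustCost c P :=
  le_csSup ((isCompact_probSimplex L).bddAbove_image
    ((continuous_uncurry_planCost c).uncurry_left P).continuousOn) (Set.mem_image_of_mem _ hα)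

lemma planCost_single (c : Fin L → Fin n → Fin m → ℝ) (P : Fin n → Fin m → ℝ) (ℓ : Fin L) :
    planCost c P (Pi.single ℓ 1) = ∑ i, ∑ j, P i j * c ℓ i j := by
  simp [planCost, Pi.single_apply]

lemma robustCost_nonneg (hc : ∀ ℓ i j, 0 ≤ c ℓ i j) (hP : ∀ i j, 0 ≤ P i j) :
    0 ≤ robustCost c P := by
  refine Real.sSup_nonneg (Set.forall_mem_image.2 fun α hα ↦ ?_)
  exact Finset.sum_nonneg fun i _ ↦ Finset.sum_nonneg fun j _ ↦ mul_nonneg (hP i j) <|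
    Finset.sum_nonneg fun ℓ _ ↦ mul_nonneg (hα.1 ℓ) (hc ℓ i j)

lemma mul_eq_zero_of_robustCost_eq_zero (hc : ∀ ℓ i j, 0 ≤ c ℓ i j) (hP : ∀ i j, 0 ≤ P i j)
    (h0 : robustCost c P = 0) (ℓ : Fin L) (i : Fin n) (j : Fin m) : P i j * c ℓ i j = 0 := by
  have term_nonneg (i : Fin n) (j : Fin m) : 0 ≤ P i j * c ℓ i j := mul_nonneg (hP i j) (hc ℓ i j)
  have cost_nonpos : ∑ i, ∑ j, P i j * c ℓ i j ≤ 0 := by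
    rw [← planCost_single, ← h0]
    exact planCost_le_robustCost c P (single_mem_probSimplex ℓ)
  refine (term_nonneg i j).antisymm' (le_trans ?_ cost_nonpos)
  calc P i j * c ℓ i j
      ≤ ∑ j, P i j * c ℓ i j :=
        Finset.single_le_sum (fun j _ ↦ term_nonneg i j) (Finset.mem_univ j)
    _ ≤ ∑ i, ∑ j, P i j * c ℓ i j :=
        Finset.single_le_sum (f := fun i ↦ ∑ j, P i j * c ℓ i j)
          (fun i _ ↦ Finset.sum_nonneg fun j _ ↦ term_nonneg i j) (Finset.mem_univ i)

end RobustCost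

section FRWD

variable {L n m : ℕ} {E : Fin L → Type*} [∀ ℓ, MetricSpace (E ℓ)] {p : ℝ}
  {a : Fin n → ℝ} {x : Fin n → ∀ ℓ, E ℓ} {b : Fin m → ℝ} {y : Fin m → ∀ ℓ, E ℓ}

/-- The cost matrices `d_ℓ(x_i(ℓ), y_j(ℓ))^p` of the robust Wasserstein distance, one for each
feature `ℓ`. -/
def featureCost (p : ℝ) (x : Fin n → ∀ ℓ, E ℓ) (y : Fin m → ∀ ℓ, E ℓ)
    (ℓ : Fin L) (i : Fin n) (j : Fin m) : ℝ :=
  dist (x i ℓ) (y j ℓ) ^ p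

lemma featureCost_nonneg (p : ℝ) (x : Fin n → ∀ ℓ, E ℓ) (y : Fin m → ∀ ℓ, E ℓ)
    (ℓ : Fin L) (i : Fin n) (j : Fin m) : 0 ≤ featureCost p x y ℓ i j :=
  Real.rpow_nonneg dist_nonneg p

lemma featureCost_eq_zero_iff (hp : p ≠ 0) {ℓ : Fin L} {i : Fin n} {j : Fin m} :
    featureCost p x y ℓ i j = 0 ↔ x i ℓ = y j ℓ := by
  rw [featureCost, Real.rpow_eq_zero dist_nonneg hp, dist_eq_zero]

lemma FRWD_eq_sInf_robustCost (p : ℝ) (a : Fin n → ℝ) (x : Fin n → ∀ ℓ, E ℓ) (b : Fin m → ℝ)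
    (y : Fin m → ∀ ℓ, E ℓ) :
    FRWD p a x b y = sInf (robustCost (featureCost p x y) '' transportPolytope a b) ^ (1 / p) := by
  simp only [FRWD, robustCost, planCost, featureCost, Set.image, eq_comm]

lemma exists_FRWD_eq_robustCost (p : ℝ) (x : Fin n → ∀ ℓ, E ℓ) (y : Fin m → ∀ ℓ, E ℓ)
    (hab : (transportPolytope a b).Nonempty) :
    ∃ P ∈ transportPolytope a b,
      FRWD p a x b y = robustCost (featureCost p x y) P ^ (1 / p) := by
  obtain ⟨P, hP, hmin⟩ := (isCompact_transportPolytope a b).exists_sInf_image_eq hab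
    (continuous_robustCost (featureCost p x y)).continuousOn
  exact ⟨P, hP, by rw [FRWD_eq_sInf_robustCost, hmin]⟩

lemma exists_coupling_of_FRWD_eq_zero (hp : p ≠ 0) (hab : (transportPolytope a b).Nonempty)
    (h0 : FRWD p a x b y = 0) :
    ∃ P ∈ transportPolytope a b, ∀ i j, P i j ≠ 0 → x i = y j := by
  obtain ⟨P, hP, hopt⟩ := exists_FRWD_eq_robustCost p x y hab
  have cost_zero : robustCost (featureCost p x y) P = 0 := by
    rwa [h0, eq_comm, Real.rpow_eq_zero (robustCost_nonneg (featureCost_nonneg p x y) hP.1)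
      (one_div_ne_zero hp)] at hopt
  refine ⟨P, hP, fun i j hij ↦ funext fun ℓ ↦ (featureCost_eq_zero_iff hp).1 ?_⟩
  exact (mul_eq_zero.1 <|
    mul_eq_zero_of_robustCost_eq_zero (featureCost_nonneg p x y) hP.1 cost_zero ℓ i j).resolve_left
    hij

open Classical in
theorem FRWD_eq_zero_imp_same_measure_general (hp : 0 < p)
    (hab : (transportPolytope a b).Nonempty) (h0 : FRWD p a x b y = 0) (z : ∀ ℓ, E ℓ) :
    (∑ i, if x i = z then a i else 0) = ∑ j, if y j = z then b j else 0 := by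
  obtain ⟨P, hP, hxy⟩ := exists_coupling_of_FRWD_eq_zero hp.ne' hab h0
  exact sum_ite_eq_sum_ite_of_mem_transportPolytope hP hxy z

end FRWD

open Classical in
/-- identity of indiscernibles — if the `p`-feature robust Wasserstein
distance between two weighted point configurations is `0`, then they define the same
discrete measure: for every point `z`, the total weight of the `x_i` equal to `z`
matches the total weight of the `y_j` equal to `z`. -/
theorem FRWD_eq_zero_imp_same_measure (L : ℕ) (hL : 1 ≤ L) (E : Fin L → Type*)
    [∀ ℓ, MetricSpace (E ℓ)] (p : ℝ) (hp : 1 ≤ p) (n m : ℕ)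
    (x : Fin n → ∀ ℓ, E ℓ) (y : Fin m → ∀ ℓ, E ℓ)
    (a : Fin n → ℝ) (b : Fin m → ℝ)
    (ha : a ∈ probSimplex n) (hb : b ∈ probSimplex m)
    (h0 : FRWD p a x b y = 0) :
    ∀ z : (∀ ℓ, E ℓ),
      (∑ i, if x i = z then a i else 0) = ∑ j, if y j = z then b j else 0 :=
  FRWD_eq_zero_imp_same_measure_general (zero_lt_one.trans_le hp)
    ⟨_, mul_mem_transportPolytope ha hb⟩ h0
end
end

section
/- Core inequality behind the FRWD triangle inequality: let (E_ℓ, d_ℓ), ℓ = 1,…,L, be metric spaces, p ≥ 1 real, and let x_1,…,x_n, y_1,…,y_m, z_1,…,z_u be points of ∏_ℓ E_ℓ. Let a ∈ ℝ^n, b ∈ ℝ^m, c ∈ ℝ^u have nonnegative entries, let P ∈ U(a,b), Q ∈ U(b,c), set b̃_j = b_j if b_j > 0 and b̃_j = 1 otherwise, and let S_{ik} = ∑_j P_{ij} Q_{jk} / b̃_j. Then for every α in the probability simplex Σ^L: (∑_{ℓ} α_ℓ ∑_{i,k} S_{ik} d_ℓ(x_i(ℓ), z_k(ℓ))^p)^{1/p}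 ≤ (∑_{ℓ} α_ℓ ∑_{i,j} P_{ij} d_ℓ(x_i(ℓ), y_j(ℓ))^p)^{1/p} + (∑_{ℓ} α_ℓ ∑_{j,k} Q_{jk} d_ℓ(y_j(ℓ), z_k(ℓ))^p)^{1/p}. -/
open scoped BigOperators

/-!
Because `P` and `Q` share the marginal `b`, they glue to a nonnegative three-way plan
`P i j * Q j k / b̃ j` whose sum over `k` is `P`, over `i` is `Q` and over `j` is `S`. The three
costs are therefore `L^p` norms of the distances `d (x, z)`, `d (x, y)` and `d (y, z)` for one
measure, the product of `α` and this plan, and Minkowski's inequality applies to the pointwise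
triangle inequality.
-/

theorem weighted_Lp_add_le {Ω : Type*} (s : Finset Ω) {w f g : Ω → ℝ} {p : ℝ} (hp : 1 ≤ p)
    (hw : ∀ ω ∈ s, 0 ≤ w ω) (hf : ∀ ω ∈ s, 0 ≤ f ω) (hg : ∀ ω ∈ s, 0 ≤ g ω) :
    (∑ ω ∈ s, w ω * (f ω + g ω) ^ p) ^ (1 / p) ≤
      (∑ ω ∈ s, w ω * f ω ^ p) ^ (1 / p) + (∑ ω ∈ s, w ω * g ω ^ p) ^ (1 / p) := by
  have hp0 : p ≠ 0 := by positivity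
  have mul_rpow_eq {v t : ℝ} (hv : 0 ≤ v) (ht : 0 ≤ t) : (v ^ (1 / p) * t) ^ p = v * t ^ p := by
    rw [Real.mul_rpow (Real.rpow_nonneg hv _) ht, one_div, Real.rpow_inv_rpow hv hp0]
  have sum_eq {h : Ω → ℝ} (hh : ∀ ω ∈ s, 0 ≤ h ω) :
      ∑ ω ∈ s, w ω * h ω ^ p = ∑ ω ∈ s, (w ω ^ (1 / p) * h ω) ^ p :=
    Finset.sum_congr rfl fun ω hω => (mul_rpow_eq (hw ω hω) (hh ω hω)).symm
  rw [sum_eq hf, sum_eq hg, sum_eq fun ω hω => add_nonneg (hf ω hω) (hg ω hω)]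
  simp only [mul_add]
  exact Real.Lp_add_le_of_nonneg s hp
    (fun ω hω => mul_nonneg (Real.rpow_nonneg (hw ω hω) _) (hf ω hω))
    (fun ω hω => mul_nonneg (Real.rpow_nonneg (hw ω hω) _) (hg ω hω))

theorem weighted_Lp_dist_triangle {Ω : Type*} (s : Finset Ω) {E : Ω → Type*}
    [∀ ω, PseudoMetricSpace (E ω)] {w : Ω → ℝ} {p : ℝ} (hp : 1 ≤ p) (hw : ∀ ω ∈ s, 0 ≤ w ω)
    (f g h : ∀ ω, E ω) :
    (∑ ω ∈ s, w ω * dist (f ω) (h ω) ^ p) ^ (1 / p) ≤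
      (∑ ω ∈ s, w ω * dist (f ω) (g ω) ^ p) ^ (1 / p) +
        (∑ ω ∈ s, w ω * dist (g ω) (h ω) ^ p) ^ (1 / p) :=
  calc (∑ ω ∈ s, w ω * dist (f ω) (h ω) ^ p) ^ (1 / p)
      ≤ (∑ ω ∈ s, w ω * (dist (f ω) (g ω) + dist (g ω) (h ω)) ^ p) ^ (1 / p) := by
        gcongr with ω hω
        · exact Finset.sum_nonneg fun ω hω => mul_nonneg (hw ω hω) (by positivity)
        · exact hw ω hω
        · exact dist_triangle _ _ _
    _ ≤ _ := weighted_Lp_add_le s hp hw (fun _ _ => dist_nonneg) (fun _ _ => dist_nonneg)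

section TransportCost

variable {Λ ι κ τ : Type*} [Fintype Λ] [Fintype ι] [Fintype κ] [Fintype τ]
  {E : Λ → Type*} [∀ ℓ, PseudoMetricSpace (E ℓ)]

/-- The `α`-weighted `p`-transport cost of a plan `P` between two finite families of points of
`∏ ℓ, E ℓ`. It carries the exponent `1 / p`, so that it scales like a distance. -/
noncomputable def weightedTransportCost (p : ℝ) (α : Λ → ℝ) (P : ι → κ → ℝ)
    (x : ι → ∀ ℓ, E ℓ) (y : κ → ∀ ℓ, E ℓ) : ℝ :=
  (∑ ℓ, α ℓ * ∑ i, ∑ j, P i j * dist (x i ℓ) (y j ℓ) ^ p) ^ (1 / p)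

theorem weightedTransportCost_marginals_triangle {p : ℝ} (hp : 1 ≤ p)
    {α : Λ → ℝ} (hα : ∀ ℓ, 0 ≤ α ℓ) {π : ι → κ → τ → ℝ} (hπ : ∀ i j k, 0 ≤ π i j k)
    (x : ι → ∀ ℓ, E ℓ) (y : κ → ∀ ℓ, E ℓ) (z : τ → ∀ ℓ, E ℓ) :
    weightedTransportCost p α (fun i k => ∑ j, π i j k) x z ≤
      weightedTransportCost p α (fun i j => ∑ k, π i j k) x y +
        weightedTransportCost p α (fun j k => ∑ i, π i j k) y z := by
  have triangle := weighted_Lp_dist_triangle (Finset.univ : Finset (Λ × ι × κ × τ))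
    (E := fun q => E q.1) (w := fun q => α q.1 * π q.2.1 q.2.2.1 q.2.2.2) hp
    (fun _ _ => mul_nonneg (hα _) (hπ _ _ _))
    (fun q => x q.2.1 q.1) (fun q => y q.2.2.1 q.1) (fun q => z q.2.2.2 q.1)
  simp only [Fintype.sum_prod_type, mul_assoc, ← Finset.mul_sum] at triangle
  have sum_xz (ℓ : Λ) : ∑ i, ∑ k, (∑ j, π i j k) * dist (x i ℓ) (z k ℓ) ^ p =
      ∑ i, ∑ j, ∑ k, π i j k * dist (x i ℓ) (z k ℓ) ^ p := by
    simp only [Finset.sum_mul]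
    exact Finset.sum_congr rfl fun i _ => Finset.sum_comm
  have sum_xy (ℓ : Λ) : ∑ i, ∑ j, (∑ k, π i j k) * dist (x i ℓ) (y j ℓ) ^ p =
      ∑ i, ∑ j, ∑ k, π i j k * dist (x i ℓ) (y j ℓ) ^ p := by
    simp only [Finset.sum_mul]
  have sum_yz (ℓ : Λ) : ∑ j, ∑ k, (∑ i, π i j k) * dist (y j ℓ) (z k ℓ) ^ p =
      ∑ i, ∑ j, ∑ k, π i j k * dist (y j ℓ) (z k ℓ) ^ p := by
    simp only [Finset.sum_mul]
    exact Finset.sum_comm_cycle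
  simpa only [weightedTransportCost, sum_xz, sum_xy, sum_yz] using triangle

end TransportCost

section Gluing

variable {ι κ τ : Type*}

/-- The paper's `b̃`: the weights `b` with the entries that are not positive replaced by `1`,
so that one may divide by all of them. -/
noncomputable def positivizedWeight (b : κ → ℝ) (j : κ) : ℝ :=
  if 0 < b j then b j else 1

theorem positivizedWeight_pos (b : κ → ℝ) (j : κ) : 0 < positivizedWeight b j := by
  unfold positivizedWeight
  split_ifs with hb
  exacts [hb, one_pos]

theorem mul_div_positivizedWeight {b : κ → ℝ} {j : κ} {t : ℝ} (ht : 0 ≤ t) (htb : t ≤ b j) :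
    t * b j / positivizedWeight b j = t := by
  unfold positivizedWeight
  split_ifs with hb
  · exact mul_div_cancel_right₀ t hb.ne'
  · obtain rfl : t = 0 := le_antisymm (htb.trans (not_lt.mp hb)) ht
    simp

/-- The three-way plan that glues `P` and `Q` along their common marginal `b`: given the middle
index, the two outer ones are independent. Summed over the middle index it is the composite
plan `P diag(1 / b̃) Q`. -/
noncomputable def gluedPlan (b : κ → ℝ) (P : ι → κ → ℝ) (Q : κ → τ → ℝ)
    (i : ι) (j : κ) (k : τ) : ℝ :=
  P i j * Q j k / positivizedWeight b j

variable {b : κ → ℝ} {P : ι → κ → ℝ} {Q : κ → τ → ℝ}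

theorem gluedPlan_nonneg (hP : ∀ i j, 0 ≤ P i j) (hQ : ∀ j k, 0 ≤ Q j k) (i : ι) (j : κ) (k : τ) :
    0 ≤ gluedPlan b P Q i j k :=
  div_nonneg (mul_nonneg (hP i j) (hQ j k)) (positivizedWeight_pos b j).le

theorem sum_gluedPlan_right [Fintype ι] [Fintype τ] (hP : ∀ i j, 0 ≤ P i j)
    (hPb : ∀ j, ∑ i, P i j = b j) (hQb : ∀ j, ∑ k, Q j k = b j) (i : ι) (j : κ) :
    ∑ k, gluedPlan b P Q i j k = P i j := by
  have hPle : P i j ≤ b j :=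
    hPb j ▸ Finset.single_le_sum (fun i _ => hP i j) (Finset.mem_univ i)
  simp only [gluedPlan]
  rw [← Finset.sum_div, ← Finset.mul_sum, hQb, mul_div_positivizedWeight (hP i j) hPle]

theorem gluedPlan_swap (b : κ → ℝ) (P : ι → κ → ℝ) (Q : κ → τ → ℝ) (i : ι) (j : κ) (k : τ) :
    gluedPlan b (Function.swap Q) (Function.swap P) k j i = gluedPlan b P Q i j k := by
  simp only [gluedPlan, Function.swap, mul_comm]

theorem sum_gluedPlan_left [Fintype ι] [Fintype τ] (hQ : ∀ j k, 0 ≤ Q j k)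
    (hPb : ∀ j, ∑ i, P i j = b j) (hQb : ∀ j, ∑ k, Q j k = b j) (j : κ) (k : τ) :
    ∑ i, gluedPlan b P Q i j k = Q j k := by
  simp only [← gluedPlan_swap b P Q]
  exact sum_gluedPlan_right (fun k j => hQ j k) hQb hPb k j

end Gluing

theorem frwd_core_inequality_general {Λ ι κ τ : Type*}
    [Fintype Λ] [Fintype ι] [Fintype κ] [Fintype τ]
    {E : Λ → Type*} [∀ ℓ, PseudoMetricSpace (E ℓ)] {p : ℝ} (hp : 1 ≤ p)
    (x : ι → ∀ ℓ, E ℓ) (y : κ → ∀ ℓ, E ℓ) (z : τ → ∀ ℓ, E ℓ)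
    {b : κ → ℝ} {P : ι → κ → ℝ} {Q : κ → τ → ℝ}
    (hP : ∀ i j, 0 ≤ P i j) (hPb : ∀ j, ∑ i, P i j = b j)
    (hQ : ∀ j k, 0 ≤ Q j k) (hQb : ∀ j, ∑ k, Q j k = b j)
    {α : Λ → ℝ} (hα : ∀ ℓ, 0 ≤ α ℓ) :
    weightedTransportCost p α (fun i k => ∑ j, gluedPlan b P Q i j k) x z ≤
      weightedTransportCost p α P x y + weightedTransportCost p α Q y z := by
  simpa only [sum_gluedPlan_right hP hPb hQb, sum_gluedPlan_left hQ hPb hQb] using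
    weightedTransportCost_marginals_triangle hp hα (gluedPlan_nonneg (b := b) hP hQ) x y z

/-- core inequality behind the FRWD triangle inequality — for the glued
plan `S = P diag(1/b̃) Q` and any `α` in the probability simplex, the weighted
`p`-transport cost from `x` to `z` along `S` is bounded by the sum of the costs
from `x` to `y` along `P` and from `y` to `z` along `Q`. -/
theorem frwd_core_inequality (L : ℕ) (E : Fin L → Type*) [∀ ℓ, MetricSpace (E ℓ)]
    (p : ℝ) (hp : 1 ≤ p) (n m u : ℕ)
    (x : Fin n → ∀ ℓ, E ℓ) (y : Fin m → ∀ ℓ, E ℓ) (z : Fin u → ∀ ℓ, E ℓ)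
    (a : Fin n → ℝ) (b : Fin m → ℝ) (c : Fin u → ℝ)
    (ha : ∀ i, 0 ≤ a i) (hb : ∀ j, 0 ≤ b j) (hc : ∀ k, 0 ≤ c k)
    (P : Fin n → Fin m → ℝ) (Q : Fin m → Fin u → ℝ)
    (hP : P ∈ transportPolytope a b) (hQ : Q ∈ transportPolytope b c)
    (btilde : Fin m → ℝ) (hbt : ∀ j, btilde j = if 0 < b j then b j else 1)
    (S : Fin n → Fin u → ℝ)
    (hS : ∀ i k, S i k = ∑ j, P i j * Q j k / btilde j)
    (α : Fin L → ℝ) (hα : (∀ ℓ, 0 ≤ α ℓ) ∧ ∑ ℓ, α ℓ = 1) :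
    (∑ ℓ, α ℓ * ∑ i, ∑ k, S i k * dist (x i ℓ) (z k ℓ) ^ p) ^ (1 / p) ≤
      (∑ ℓ, α ℓ * ∑ i, ∑ j, P i j * dist (x i ℓ) (y j ℓ) ^ p) ^ (1 / p) +
      (∑ ℓ, α ℓ * ∑ j, ∑ k, Q j k * dist (y j ℓ) (z k ℓ) ^ p) ^ (1 / p) := by
  obtain rfl : btilde = positivizedWeight b := funext hbt
  obtain rfl : S = fun i k => ∑ j, gluedPlan b P Q i j k := funext₂ hS
  exact frwd_core_inequality_general hp x y z hP.1 hP.2.2 hQ.1 hQ.2.1 hα.1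
end

section
/- The softmax function with inverse temperature λ is λ-Lipschitz with respect to the Euclidean norm: let L ≥ 1 and λ > 0, and define σ_λ : ℝ^L → ℝ^L by σ_λ(z)_ℓ = exp(λ z_ℓ) / ∑_{ℓ'=1}^L exp(λ z_{ℓ'}). Then for all z, z' ∈ ℝ^L, ‖σ_λ(z) − σ_λ(z')‖₂ ≤ λ ‖z − z'‖₂, where ‖·‖₂ denotes the Euclidean norm on ℝ^L. -/
open scoped BigOperators

/-!
The Jacobian of softmax at `z` is `λ` times the covariance matrix `diag p - p pᵀ` of a one-hot
random vector with distribution `p = σ_λ(z)`. The `i`-th row of this symmetric matrix has absolute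
sum `2 pᵢ (1 - pᵢ) ≤ 1 / 2`, so by the Schur test its `ℓ²` operator norm is at most `1 / 2`, and
the mean value inequality gives the Lipschitz constant `|λ| / 2`. The Jacobian is computed by
writing `pᵢ = exp (λ zᵢ - F z)`, where `F` is the log-sum-exp function, whose gradient is `λ p`.
-/

open Matrix
open scoped Matrix.Norms.L2Operator

section SchurTest

variable {𝕜 m n : Type*} [RCLike 𝕜] [Fintype n]

lemma norm_sq_mulVec_apply_le (A : Matrix m n 𝕜) (x : n → 𝕜) (i : m) :
    ‖(A *ᵥ x) i‖ ^ 2 ≤ (∑ j, ‖A i j‖) * ∑ j, ‖A i j‖ * ‖x j‖ ^ 2 :=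
  calc ‖(A *ᵥ x) i‖ ^ 2
      ≤ (∑ j, ‖A i j‖ * ‖x j‖) ^ 2 := by
        gcongr
        exact norm_sum_le_of_le _ fun j _ ↦ norm_mul_le _ _
    _ ≤ (∑ j, ‖A i j‖) * ∑ j, ‖A i j‖ * ‖x j‖ ^ 2 :=
        Finset.sum_sq_le_sum_mul_sum_of_sq_le_mul _ (fun _ _ ↦ by positivity)
          (fun _ _ ↦ by positivity) fun _ _ ↦ le_of_eq (by ring)

variable [Fintype m]

lemma sum_norm_sq_mulVec_le {A : Matrix m n 𝕜} {r c : ℝ} (hr : 0 ≤ r)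
    (hrow : ∀ i, ∑ j, ‖A i j‖ ≤ r) (hcol : ∀ j, ∑ i, ‖A i j‖ ≤ c) (x : n → 𝕜) :
    ∑ i, ‖(A *ᵥ x) i‖ ^ 2 ≤ r * c * ∑ j, ‖x j‖ ^ 2 :=
  calc ∑ i, ‖(A *ᵥ x) i‖ ^ 2
      ≤ ∑ i, r * ∑ j, ‖A i j‖ * ‖x j‖ ^ 2 := by
        gcongr with i
        exact (norm_sq_mulVec_apply_le A x i).trans (by gcongr; exact hrow i)
    _ = r * ∑ j, (∑ i, ‖A i j‖) * ‖x j‖ ^ 2 := by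
        simp only [← Finset.mul_sum, Finset.sum_mul]
        rw [Finset.sum_comm]
    _ ≤ r * ∑ j, c * ‖x j‖ ^ 2 := by
        gcongr with j
        exact hcol j
    _ = r * c * ∑ j, ‖x j‖ ^ 2 := by rw [← Finset.mul_sum, mul_assoc]

lemma l2_opNorm_le_sqrt_of_sum_norm_le [DecidableEq n] {A : Matrix m n 𝕜} {r c : ℝ} (hr : 0 ≤ r)
    (hrow : ∀ i, ∑ j, ‖A i j‖ ≤ r) (hcol : ∀ j, ∑ i, ‖A i j‖ ≤ c) : ‖A‖ ≤ √(r * c) := by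
  rw [l2_opNorm_def]
  refine ContinuousLinearMap.opNorm_le_bound _ (Real.sqrt_nonneg _) fun x ↦ ?_
  rw [EuclideanSpace.norm_eq, EuclideanSpace.norm_eq, ← Real.sqrt_mul' _ (by positivity)]
  exact Real.sqrt_le_sqrt (sum_norm_sq_mulVec_le hr hrow hcol x)

end SchurTest

section CategoricalCov

variable {ι : Type*} [DecidableEq ι]

/-- The covariance matrix `diag p - p pᵀ` of the one-hot vector `Pi.single X 1`, where `X` is a
random index with distribution `p`. -/
def categoricalCov (p : ι → ℝ) : Matrix ι ι ℝ :=
  diagonal p - vecMulVec p p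

lemma isSymm_categoricalCov (p : ι → ℝ) : (categoricalCov p).IsSymm := by
  simp [categoricalCov, IsSymm, transpose_vecMulVec]

variable [Fintype ι]

lemma categoricalCov_mulVec_apply (p d : ι → ℝ) (i : ι) :
    (categoricalCov p *ᵥ d) i = p i * (d i - p ⬝ᵥ d) := by
  simp [categoricalCov, sub_mulVec, mulVec_diagonal, vecMulVec_mulVec, mul_sub, mul_comm]

lemma sum_norm_categoricalCov_le {p : ι → ℝ} (hp : ∀ i, 0 ≤ p i) (hsum : ∑ i, p i ≤ 1) (i : ι) :
    ∑ j, ‖categoricalCov p i j‖ ≤ 1 / 2 := by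
  have hsplit : p i + ∑ j ∈ Finset.univ.erase i, p j ≤ 1 :=
    (Finset.add_sum_erase _ p (Finset.mem_univ i)).trans_le hsum
  have hle : p i ≤ 1 := (Finset.single_le_sum (fun j _ ↦ hp j) (Finset.mem_univ i)).trans hsum
  have hdiag : ‖categoricalCov p i i‖ = p i * (1 - p i) := by
    have happly : categoricalCov p i i = p i * (1 - p i) := by
      simp [categoricalCov, vecMulVec_apply, mul_sub]
    rw [happly, Real.norm_of_nonneg (mul_nonneg (hp i) (sub_nonneg.2 hle))]
  have hoff : ∀ j ∈ Finset.univ.erase i, ‖categoricalCov p i j‖ = p i * p j := fun j hj ↦ by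
    simp [categoricalCov, vecMulVec_apply, diagonal_apply_ne' _ (Finset.ne_of_mem_erase hj),
      abs_of_nonneg (hp _)]
  calc ∑ j, ‖categoricalCov p i j‖
      = p i * (1 - p i) + p i * ∑ j ∈ Finset.univ.erase i, p j := by
        rw [← Finset.add_sum_erase _ _ (Finset.mem_univ i), hdiag, Finset.sum_congr rfl hoff,
          Finset.mul_sum]
    _ ≤ p i * (1 - p i) + p i * (1 - p i) := by
        gcongr
        · exact hp i
        · linarith
    _ ≤ 1 / 2 := by linarith [sq_nonneg (2 * p i - 1)]

lemma l2_opNorm_categoricalCov_le {p : ι → ℝ} (hp : ∀ i, 0 ≤ p i) (hsum : ∑ i, p i ≤ 1) :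
    ‖categoricalCov p‖ ≤ 1 / 2 := by
  have hrow := sum_norm_categoricalCov_le hp hsum
  have hcol : ∀ j, ∑ i, ‖categoricalCov p i j‖ ≤ 1 / 2 := fun j ↦ by
    simpa only [(isSymm_categoricalCov p).apply] using hrow j
  calc ‖categoricalCov p‖ ≤ √(1 / 2 * (1 / 2)) :=
        l2_opNorm_le_sqrt_of_sum_norm_le (by norm_num) hrow hcol
    _ = 1 / 2 := Real.sqrt_mul_self (by norm_num)

end CategoricalCov

section Softmax

variable {ι : Type*} [Fintype ι]

/-- The softmax function with inverse temperature `lam`, as a map of Euclidean space. -/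
noncomputable def softmax (lam : ℝ) (z : EuclideanSpace ℝ ι) : EuclideanSpace ℝ ι :=
  WithLp.toLp 2 fun i ↦ Real.exp (lam * z i) / ∑ j, Real.exp (lam * z j)

/-- The log-partition function, a potential of softmax: its gradient is `lam • softmax lam`. -/
noncomputable def logSumExp (lam : ℝ) (z : EuclideanSpace ℝ ι) : ℝ :=
  Real.log (∑ j, Real.exp (lam * z j))

lemma sum_exp_pos [Nonempty ι] (f : ι → ℝ) : 0 < ∑ j, Real.exp (f j) :=
  Finset.sum_pos (fun _ _ ↦ Real.exp_pos _) Finset.univ_nonempty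

lemma softmax_apply_nonneg (lam : ℝ) (z : EuclideanSpace ℝ ι) (i : ι) : 0 ≤ softmax lam z i :=
  div_nonneg (Real.exp_nonneg _) (Finset.sum_nonneg fun _ _ ↦ Real.exp_nonneg _)

lemma sum_softmax_le_one (lam : ℝ) (z : EuclideanSpace ℝ ι) : ∑ i, softmax lam z i ≤ 1 := by
  simp only [softmax, ← Finset.sum_div]
  exact div_self_le_one _

lemma softmax_apply_eq_exp_sub_logSumExp (lam : ℝ) (z : EuclideanSpace ℝ ι) (i : ι) :
    softmax lam z i = Real.exp (lam * z i - logSumExp lam z) := by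
  have : Nonempty ι := ⟨i⟩
  rw [logSumExp, Real.exp_sub, Real.exp_log (sum_exp_pos _), softmax]

lemma hasStrictFDerivAt_logSumExp [Nonempty ι] (lam : ℝ) (z : EuclideanSpace ℝ ι) :
    HasStrictFDerivAt (logSumExp lam) (lam • innerSL ℝ (softmax lam z)) z := by
  have hsum := HasStrictFDerivAt.fun_sum (u := Finset.univ) fun j _ ↦
    ((EuclideanSpace.proj (𝕜 := ℝ) j).hasStrictFDerivAt (x := z)).const_mul lam |>.exp
  refine (hsum.log (sum_exp_pos _).ne').congr_fderiv ?_
  ext d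
  simp only [softmax, _root_.smul_apply, _root_.sum_apply, PiLp.proj_apply, smul_eq_mul,
    coe_innerSL_apply, PiLp.inner_apply, RCLike.inner_apply, conj_trivial, Finset.mul_sum]
  exact Finset.sum_congr rfl fun j _ ↦ by ring

lemma hasStrictFDerivAt_softmax [DecidableEq ι] (lam : ℝ) (z : EuclideanSpace ℝ ι) :
    HasStrictFDerivAt (softmax lam)
      (lam • toEuclideanCLM (𝕜 := ℝ) (categoricalCov (softmax lam z))) z := by
  refine hasStrictFDerivAt_euclidean.2 fun i ↦ ?_
  have : Nonempty ι := ⟨i⟩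
  have hexp := ((EuclideanSpace.proj (𝕜 := ℝ) i).hasStrictFDerivAt.const_mul lam |>.sub
    (hasStrictFDerivAt_logSumExp lam z)).exp
  simp only [softmax_apply_eq_exp_sub_logSumExp]
  refine hexp.congr_fderiv ?_
  ext d
  have hinner : inner ℝ (softmax lam z) d = softmax lam z ⬝ᵥ d := by
    simp [EuclideanSpace.inner_eq_star_dotProduct, dotProduct_comm]
  simp only [PiLp.proj_apply, Pi.sub_apply, _root_.smul_apply, _root_.sub_apply, smul_eq_mul,
    coe_innerSL_apply, hinner, ContinuousLinearMap.comp_apply, PiLp.smul_apply,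
    ofLp_toEuclideanCLM, categoricalCov_mulVec_apply, softmax_apply_eq_exp_sub_logSumExp lam z i]
  ring

theorem softmax_lipschitz_general (lam : ℝ) :
    LipschitzWith (‖lam‖₊ / 2) (softmax lam : EuclideanSpace ℝ ι → EuclideanSpace ℝ ι) := by
  classical
  refine lipschitzOnWith_univ.1 <| convex_univ.lipschitzOnWith_of_nnnorm_hasFDerivWithin_le
    (fun z _ ↦ (hasStrictFDerivAt_softmax lam z).hasFDerivAt.hasFDerivWithinAt) fun z _ ↦ ?_
  have hcov := l2_opNorm_categoricalCov_le (softmax_apply_nonneg lam z) (sum_softmax_le_one lam z)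
  rw [nnnorm_smul, div_eq_mul_one_div]
  gcongr
  exact hcov

end Softmax

/-- the softmax function with inverse temperature `λ > 0` is
`λ`-Lipschitz with respect to the Euclidean norm on `ℝ^L`. -/
theorem softmax_lipschitz (L : ℕ) (hL : 1 ≤ L) (lam : ℝ) (hlam : 0 < lam)
    (σ : EuclideanSpace ℝ (Fin L) → EuclideanSpace ℝ (Fin L))
    (hσ : ∀ (z : EuclideanSpace ℝ (Fin L)) (ℓ : Fin L),
      σ z ℓ = Real.exp (lam * z ℓ) / ∑ ℓ' : Fin L, Real.exp (lam * z ℓ')) :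
    ∀ z z' : EuclideanSpace ℝ (Fin L), ‖σ z - σ z'‖ ≤ lam * ‖z - z'‖ := by
  obtain rfl : σ = softmax lam := funext fun z ↦ PiLp.ext (hσ z)
  have hlip := (softmax_lipschitz_general (ι := Fin L) lam).weaken (half_le_self zero_le)
  simpa [abs_of_pos hlam] using hlip.norm_sub_le
end
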